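/- For every ε > 0 and every real number c < 0, there exist δ with 0 < δ < ε and an infinitely differentiable monotone nondecreasing function f : ℝ → ℝ such that 0 ≤ f(t) ≤ 1 for all t, f(t) = 0 for all t ≤ δ, f(t) = 1 for all t ≥ ε, and the derivative of f satisfies f′(t) < −2/(t·c) for every t > 0. -/

import Mathlib

/-!
The bound `-2 / (t * c)` is a positive constant times `1 / t`, whose integral diverges at `0`, so a
slow enough transition in the variable `log t` fits below it. With `S = Real.smoothTransition`,
whose derivative is bounded by some `M` (`exists_deriv_smoothTransition_le`), take
`f t = S (1 + log (t / ε) / L)` for `t > 0`. It climbs from `0` to `1` on `[ε * exp (-L), ε]`, and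
`f' t ≤ M / (L * t)`, which is less than `-2 / (t * c)` once `2 * L > -c * M`.
-/

/-- `Real.smoothTransition` is locally constant off `[0, 1]`, so compactness bounds its
derivative. -/
lemma exists_deriv_smoothTransition_le :
    ∃ M : ℝ, 0 ≤ M ∧ ∀ x, deriv Real.smoothTransition x ≤ M := by
  have hc : Continuous (deriv Real.smoothTransition) :=
    (Real.smoothTransition.contDiff (n := 1)).continuous_deriv (by norm_num)
  obtain ⟨M, hM⟩ := (isCompact_Icc (a := (0 : ℝ)) (b := 1)).bddAbove_image hc.continuousOn
  refine ⟨max M 0, le_max_right _ _, fun x => ?_⟩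
  rcases lt_or_ge x 0 with h0 | h0
  · have h : Real.smoothTransition =ᶠ[nhds x] fun _ => 0 := by
      filter_upwards [Iio_mem_nhds h0] with y hy
      exact Real.smoothTransition.zero_of_nonpos (le_of_lt hy)
    rw [h.deriv_eq]; simp
  rcases lt_or_ge 1 x with h1 | h1
  · have h : Real.smoothTransition =ᶠ[nhds x] fun _ => 1 := by
      filter_upwards [Ioi_mem_nhds h1] with y hy
      exact Real.smoothTransition.one_of_one_le (le_of_lt hy)
    rw [h.deriv_eq]; simp
  · exact (hM ⟨x, ⟨h0, h1⟩, rfl⟩).trans (le_max_left _ _)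

/-- Analytic core of the interpolation lemma of Mrowka–Rollin, Section 2.1:
for every `ε > 0` and every `c < 0`, there is a `δ ∈ (0, ε)` and a smooth
nondecreasing cutoff function `f : ℝ → ℝ` with values in `[0,1]`, equal to `0`
on `(-∞, δ]` and to `1` on `[ε, ∞)`, whose derivative satisfies
`f′(t) < -2/(t·c)` for every `t > 0`.  This is what makes the interpolated
form `½ d(t² e^{μ f(t)} η₁)` symplectic. -/
theorem exists_smooth_cutoff_deriv_lt
    (ε c : ℝ) (hε : 0 < ε) (hc : c < 0) :
    ∃ (δ : ℝ) (f : ℝ → ℝ), 0 < δ ∧ δ < ε ∧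
      ContDiff ℝ (⊤ : ℕ∞) f ∧ Monotone f ∧
      (∀ t : ℝ, 0 ≤ f t ∧ f t ≤ 1) ∧
      (∀ t : ℝ, t ≤ δ → f t = 0) ∧
      (∀ t : ℝ, ε ≤ t → f t = 1) ∧
      (∀ t : ℝ, 0 < t → deriv f t < -2 / (t * c)) := by
  obtain ⟨M, hM0, hM⟩ := exists_deriv_smoothTransition_le
  obtain ⟨L, hL⟩ : ∃ L : ℝ, L = M * (-c) / 2 + 1 := ⟨_, rfl⟩
  have hMc : 0 ≤ M * (-c) := mul_nonneg hM0 (by linarith)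
  have hL0 : 0 < L := by linarith
  set u : ℝ → ℝ := fun t => 1 + Real.log (t / ε) / L with hu
  set g : ℝ → ℝ := fun t => Real.smoothTransition (u t) with hg
  -- `Real.log t = Real.log |t|` for negative `t`, so the formula is used on `t > 0` only.
  set f : ℝ → ℝ := fun t => if t ≤ 0 then 0 else g t with hf
  have hpos : ∀ t, 0 < t → f t = g t := fun t ht => by simp [hf, not_le.2 ht]
  have hδ : 0 < ε * Real.exp (-L) := by positivity
  have hzero : ∀ t, t ≤ ε * Real.exp (-L) → f t = 0 := by
    intro t ht
    rcases le_or_gt t 0 with h | h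
    · simp [hf, h]
    rw [hpos t h]
    apply Real.smoothTransition.zero_of_nonpos
    have h1 : Real.log (t / ε) ≤ -L := by
      rw [Real.log_le_iff_le_exp (by positivity), div_le_iff₀ hε]
      linarith
    have h2 : Real.log (t / ε) / L ≤ -1 := by
      rw [div_le_iff₀ hL0]; linarith
    simp only [hu]; linarith
  have hnear : ∀ t, 0 < t → f =ᶠ[nhds t] g := fun t ht => by
    filter_upwards [Ioi_mem_nhds ht] with y hy using hpos y hy
  have hnn : ∀ t, 0 ≤ f t := fun t => by
    simp only [hf]; split_ifs
    exacts [le_rfl, Real.smoothTransition.nonneg _]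
  refine ⟨ε * Real.exp (-L), f, hδ, ?_, ?_, ?_, fun t => ⟨hnn t, ?_⟩, hzero, ?_, ?_⟩
  · exact mul_lt_of_lt_one_right hε (Real.exp_lt_one_iff.2 (by linarith))
  · rw [contDiff_iff_contDiffAt]
    intro t
    rcases le_or_gt t 0 with h | h
    · have h' : f =ᶠ[nhds t] fun _ => 0 := by
        filter_upwards [Iio_mem_nhds (h.trans_lt hδ)] with y hy using hzero y (le_of_lt hy)
      exact contDiffAt_const.congr_of_eventuallyEq h'
    · refine ContDiffAt.congr_of_eventuallyEq ?_ (hnear t h)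
      refine Real.smoothTransition.contDiffAt.comp t ?_
      exact contDiffAt_const.add
        (((contDiffAt_id.div_const ε).log (div_pos h hε).ne').div_const L)
  · intro s t hst
    rcases le_or_gt s 0 with h | h
    · rw [hzero s (h.trans hδ.le)]; exact hnn t
    · rw [hpos s h, hpos t (h.trans_le hst)]
      apply Real.smoothTransition.monotone
      simp only [hu]
      gcongr
  · simp only [hf]; split_ifs
    exacts [zero_le_one, Real.smoothTransition.le_one _]
  · intro t ht
    rw [hpos t (hε.trans_le ht)]
    apply Real.smoothTransition.one_of_one_le
    have : 0 ≤ Real.log (t / ε) / L :=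
      div_nonneg (Real.log_nonneg ((one_le_div hε).2 ht)) hL0.le
    simp only [hu]; linarith
  · intro t ht
    have hu' : HasDerivAt u (1 / ε / (t / ε) / L) t :=
      ((((hasDerivAt_id t).div_const ε).log (div_pos ht hε).ne').div_const L).const_add 1
    have hS : HasDerivAt Real.smoothTransition (deriv Real.smoothTransition (u t)) (u t) :=
      ((Real.smoothTransition.contDiff (n := 1)).differentiable (by norm_num) _).hasDerivAt
    have hg' : HasDerivAt g _ t := hS.comp t hu'
    rw [(hnear t ht).deriv_eq, hg'.deriv]
    have e1 : 1 / ε / (t / ε) / L = 1 / (t * L) := by field_simp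
    have e2 : -2 / (t * c) = 2 / (t * (-c)) := by
      rw [mul_neg, div_neg, neg_div]
    rw [e1, e2]
    calc _ ≤ M * (1 / (t * L)) := mul_le_mul_of_nonneg_right (hM _) (by positivity)
      _ = M / (t * L) := by ring
      _ < _ := by
        rw [div_lt_div_iff₀ (by positivity) (mul_pos ht (by linarith))]
        have : M * (-c) < 2 * L := by linarith
        nlinarith
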